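/- The quotient ring k[x]/J_n is toral in the V_n-grading: for every b ∈ ℕ^n, the b-graded component of k[x]/J_n (the image in k[x]/J_n of the k-span of the monomials x^u with V_n u = b) has k-dimension at most 2^{c_{n−1}}; equivalently, the number of equivalence classes of V_n^{-1}[b] modulo L'_n is at most 2^{c_{n−1}} for every b ∈ ℕ^n. -/

import Mathlib

open scoped BigOperators

namespace Veronese

open MvPolynomial

/-- `c m = C(m,2)`. -/
def c (m : ℕ) : ℕ := m.choose 2

variable (n : ℕ)

/-- multiplicity (as ℤ) of the index `i` in the unordered pair `s`. -/
def wt (s : Sym2 (Fin n)) : Fin n → ℤ :=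
  Sym2.lift ⟨fun a b i => (if i = a then 1 else 0) + (if i = b then 1 else 0),
    fun a b => funext fun i => add_comm _ _⟩ s

/-- The Veronese grading map `V_n : ℤ^P → ℤ^n`, sending `e_{ij} ↦ e_i + e_j`. -/
def Vmap : (Sym2 (Fin n) → ℤ) →ₗ[ℤ] (Fin n → ℤ) where
  toFun u := fun i => ∑ s : Sym2 (Fin n), u s * wt n s i
  map_add' u v := funext fun i => by
    simp [add_mul, Finset.sum_add_distrib]
  map_smul' m u := funext fun i => by
    simp [Finset.mul_sum, smul_eq_mul, mul_assoc]

/-- The Veronese lattice `L_n = ker V_n`. -/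
def Llat : Submodule ℤ (Sym2 (Fin n) → ℤ) := LinearMap.ker (Vmap n)

/-- standard basis vector `e_{ij}` of `ℤ^P`. -/
def e (i j : Fin n) : Sym2 (Fin n) → ℤ := Pi.single s(i, j) 1

lemma e_comm (i j : Fin n) : e n i j = e n j i := by
  unfold e; rw [Sym2.eq_swap]

/-- `[ij|ij] = e_{ii} + e_{jj} - 2 e_{ij}`. -/
def minorVec (i j : Fin n) : Sym2 (Fin n) → ℤ := e n i i + e n j j - 2 • e n i j

/-- The principal minor lattice `L'_n`. -/
def L'lat : Submodule ℤ (Sym2 (Fin n) → ℤ) :=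
  Submodule.span ℤ {v | ∃ i j : Fin n, i < j ∧ v = minorVec n i j}

/-- the last index `n` (zero-based: `n-1`) of `Fin n`. -/
def lastIdx (hn : 0 < n) : Fin n := ⟨n - 1, Nat.sub_lt hn one_pos⟩

/-- embedding `[n-1] → [n]`. -/
def ι : Fin (n - 1) → Fin n := Fin.castLE (Nat.sub_le n 1)

/-- `[in|jn] = e_{ij} + e_{nn} - e_{in} - e_{jn}` for `i,j ∈ [n-1]`. -/
def Bvec (hn : 0 < n) : Sym2 (Fin (n - 1)) → (Sym2 (Fin n) → ℤ) :=
  Sym2.lift ⟨fun i j =>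
      e n (ι n i) (ι n j) + e n (lastIdx n hn) (lastIdx n hn)
        - e n (ι n i) (lastIdx n hn) - e n (ι n j) (lastIdx n hn),
    fun i j => by dsimp only; rw [e_comm n (ι n i) (ι n j)]; ring⟩

/-- The family `B'`: `[in|in]` on the diagonal, `2[in|jn]` off it. -/
noncomputable def B'vec (hn : 0 < n) (s : Sym2 (Fin (n - 1))) : Sym2 (Fin n) → ℤ :=
  if s.IsDiag then Bvec n hn s else 2 • Bvec n hn s

/-- multiplicity (as ℕ) of the index `i` in the unordered pair `s`. -/
def wtN (s : Sym2 (Fin n)) : Fin n → ℕ :=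
  Sym2.lift ⟨fun a b i => (if i = a then 1 else 0) + (if i = b then 1 else 0),
    fun a b => funext fun i => add_comm _ _⟩ s

/-- The Veronese degree of an exponent vector `u ∈ ℕ^P`. -/
def VN (u : Sym2 (Fin n) →₀ ℕ) : Fin n → ℕ := fun i => ∑ s : Sym2 (Fin n), u s * wtN n s i

/-- The fiber `V_n^{-1}[b] = {u ∈ ℕ^P : V_n u = b}`. -/
def fiber (b : Fin n → ℕ) : Set (Sym2 (Fin n) →₀ ℕ) := {u | VN n u = b}

/-- natural inclusion `ℕ^P → ℤ^P`. -/
def toZ (u : Sym2 (Fin n) →₀ ℕ) : Sym2 (Fin n) → ℤ := fun s => (u s : ℤ)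

lemma fiber_finite (b : Fin n → ℕ) : (fiber n b).Finite := by
  classical
  have hsub : fiber n b ⊆
      ↑(Finset.Iic ((Finsupp.equivFunOnFinite.symm fun _ => ∑ i, b i) : Sym2 (Fin n) →₀ ℕ)) := by
    intro u hu
    simp only [Finset.coe_Iic, Set.mem_Iic, Finsupp.le_def]
    intro s
    induction s using Sym2.ind with
    | _ i j =>
      have h1 : u s(i, j) * wtN n s(i, j) i ≤ VN n u i :=
        Finset.single_le_sum (f := fun s => u s * wtN n s i)
          (fun s _ => Nat.zero_le _) (Finset.mem_univ s(i, j))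
      have h2 : 1 ≤ wtN n s(i, j) i := by
        simp only [wtN, Sym2.lift_mk, if_pos rfl]
        exact Nat.le_add_right 1 _
      have h3 : u s(i, j) ≤ b i := by
        have hb : VN n u i = b i := congrFun hu i
        calc u s(i, j) ≤ u s(i, j) * wtN n s(i, j) i := Nat.le_mul_of_pos_right _ h2
          _ ≤ VN n u i := h1
          _ = b i := hb
      calc u s(i, j) ≤ b i := h3
        _ ≤ ∑ i, b i := Finset.single_le_sum (fun _ _ => Nat.zero_le _) (Finset.mem_univ _)
        _ = (Finsupp.equivFunOnFinite.symm fun _ => ∑ i, b i) s(i, j) := by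
            simp
  exact Set.Finite.subset (Finset.finite_toSet _) hsub

variable (k : Type*) [Field k]

/-- the polynomial ring `k[x_{ij}]`. -/
abbrev R := MvPolynomial (Sym2 (Fin n)) k

/-- The principal minor ideal `J_n`. -/
noncomputable def Jideal : Ideal (R n k) :=
  Ideal.span {f | ∃ i j : Fin n, i < j ∧ f = X s(i, i) * X s(j, j) - X s(i, j) ^ 2}

/-- The map `x_{ij} ↦ t_i t_j`. -/
noncomputable def veroHom : R n k →ₐ[k] MvPolynomial (Fin n) k :=
  aeval fun s => Sym2.lift ⟨fun a b => X a * X b, fun a b => mul_comm _ _⟩ s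

/-- The second Veronese ideal `I_n`. -/
noncomputable def Iideal : Ideal (R n k) := RingHom.ker (veroHom n k)

/-- A ℤ₂-twisting: an automorphism sending each variable to ± itself. -/
def IsTwisting (φ : R n k ≃ₐ[k] R n k) : Prop :=
  ∀ s : Sym2 (Fin n), φ (X s) = X s ∨ φ (X s) = - X s

/-- `f` is V_n-homogeneous of degree `b`. -/
def VHomog (f : R n k) (b : Fin n → ℕ) : Prop := ∀ u ∈ f.support, VN n u = b

/-- The fiber over `b` as a finite set. -/
noncomputable def fiberFinset (b : Fin n → ℕ) : Finset (Sym2 (Fin n) →₀ ℕ) :=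
  (fiber_finite n b).toFinset

/-- generating function of the canonical (0/1 off-diagonal) representatives of
the fiber over `b`. -/
noncomputable def pplusAt (b : Fin n → ℕ) : R n k :=
  ∑ u ∈ (fiberFinset n b).filter (fun u => ∀ s : Sym2 (Fin n), ¬s.IsDiag → u s ≤ 1),
    monomial u (1 : k)

/-- `p⁺_{n,j}` (for `n` odd): fiber over `(n-2,…,n-2) + e_j`. -/
noncomputable def pplusOdd (j : Fin n) : R n k :=
  pplusAt n k fun i => (n - 2) + if i = j then 1 else 0

/-- `p⁺_n` (for `n` even): fiber over `(n-2,…,n-2)`. -/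
noncomputable def pplusEven : R n k :=
  pplusAt n k fun _ => n - 2

/-- `p_n = ∏_{i<j∈[n-1]} (x_{ij} x_{nn} + x_{in} x_{jn})`. -/
noncomputable def pn (hn : 0 < n) : R n k :=
  ∏ p ∈ Finset.univ.filter (fun p : Fin (n - 1) × Fin (n - 1) => p.1 < p.2),
    (X s(ι n p.1, ι n p.2) * X s(lastIdx n hn, lastIdx n hn)
      + X s(ι n p.1, lastIdx n hn) * X s(ι n p.2, lastIdx n hn))


lemma VN_add (n : ℕ) (u v : Sym2 (Fin n) →₀ ℕ) : VN n (u + v) = VN n u + VN n v := by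
  funext i
  simp [VN, add_mul, Finset.sum_add_distrib]

lemma VN_single (n : ℕ) (s : Sym2 (Fin n)) (m : ℕ) (i : Fin n) :
    VN n (Finsupp.single s m) i = m * wtN n s i := by
  classical
  simp [VN, Finsupp.single_apply]

lemma wtN_eq (n : ℕ) (s : Sym2 (Fin n)) (i : Fin n) :
    wtN n s i = (if s = s(i, i) then 1 else 0) + ∑ j : Fin n, (if s = s(i, j) then 1 else 0) := by
  classical
  induction s using Sym2.ind with
  | _ a b =>
    by_cases ha : i = a
    · subst ha
      have : ∀ j, (s(i, b) = s(i, j)) ↔ b = j := by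
        intro j; simp; rintro rfl rfl; rfl
      simp only [this]
      by_cases hb : i = b
      · subst hb; simp [wtN]
      · have hb' : ¬ b = i := fun h => hb h.symm
        simp [wtN, hb, hb']
    · by_cases hb : i = b
      · subst hb
        have : ∀ j, (s(a, i) = s(i, j)) ↔ a = j := by
          intro j; rw [Sym2.eq_swap]; simp; rintro rfl rfl; rfl
        simp only [this]
        have ha' : ¬ a = i := fun h => ha h.symm
        simp [wtN, ha, ha']
      · have : ∀ j, ¬ (s(a, b) = s(i, j)) := by
          intro j h
          rw [Sym2.eq_iff] at h
          rcases h with h | h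
          · exact ha h.1.symm
          · exact hb h.2.symm
        simp [wtN, ha, hb, this]

lemma VN_eq (n : ℕ) (u : Sym2 (Fin n) →₀ ℕ) (i : Fin n) :
    VN n u i = u s(i, i) + ∑ j : Fin n, u s(i, j) := by
  classical
  unfold VN
  simp only [wtN_eq, mul_add, Finset.sum_add_distrib, Finset.mul_sum]
  rw [Finset.sum_comm]
  simp

/-- `u` and `v` agree modulo the lattice and modulo the ideal. -/
def Rel (n : ℕ) (k : Type*) [Field k] (u v : Sym2 (Fin n) →₀ ℕ) : Prop :=
  toZ n u - toZ n v ∈ L'lat n ∧ (monomial u (1 : k) - monomial v (1 : k) : R n k) ∈ Jideal n k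

lemma Rel.symm' {n : ℕ} {k : Type*} [Field k] {u v : Sym2 (Fin n) →₀ ℕ}
    (h : Rel n k u v) : Rel n k v u := by
  constructor
  · have := (L'lat n).neg_mem h.1
    rwa [neg_sub] at this
  · have := (Jideal n k).neg_mem h.2
    rwa [neg_sub] at this

lemma Rel.trans' {n : ℕ} {k : Type*} [Field k] {u v w : Sym2 (Fin n) →₀ ℕ}
    (h : Rel n k u v) (h' : Rel n k v w) : Rel n k u w := by
  constructor
  · have := (L'lat n).add_mem h.1 h'.1
    rwa [sub_add_sub_cancel] at this
  · have := (Jideal n k).add_mem h.2 h'.2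
    rwa [sub_add_sub_cancel] at this

lemma rel_step (n : ℕ) (k : Type*) [Field k] (w : Sym2 (Fin n) →₀ ℕ) (i j : Fin n) (h : i < j) :
    Rel n k (w + (Finsupp.single s(i, i) 1 + Finsupp.single s(j, j) 1))
      (w + Finsupp.single s(i, j) 2) := by
  classical
  constructor
  · apply Submodule.subset_span
    refine ⟨i, j, h, ?_⟩
    funext s
    simp only [toZ, minorVec, e, Pi.sub_apply, Pi.add_apply, Finsupp.add_apply,
      Finsupp.single_apply, Pi.single_apply, Pi.smul_apply, eq_comm (a := s)]
    push_cast
    simp only [smul_eq_mul, nsmul_eq_mul]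
    split_ifs <;> simp
  · have : (monomial (w + (Finsupp.single s(i, i) 1 + Finsupp.single s(j, j) 1)) (1 : k)
        - monomial (w + Finsupp.single s(i, j) 2) (1 : k) : R n k)
        = monomial w (1 : k) * (X s(i, i) * X s(j, j) - X s(i, j) ^ 2) := by
      rw [mul_sub, X_pow_eq_monomial, X, X, monomial_mul, monomial_mul, monomial_mul]
      simp
    rw [this]
    exact Ideal.mul_mem_left _ _ (Ideal.subset_span ⟨i, j, h, rfl⟩)

lemma exists_red (n : ℕ) (k : Type*) [Field k] : ∀ (m : ℕ) (u : Sym2 (Fin n) →₀ ℕ),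
    (∑ s : Sym2 (Fin n), if s.IsDiag then 0 else u s) = m →
    ∃ v, Rel n k u v ∧ VN n v = VN n u ∧ (∀ s, ¬ s.IsDiag → v s ≤ 1) ∧
      ∀ s, ¬ s.IsDiag → (v s : ZMod 2) = u s := by
  classical
  intro m
  induction m using Nat.strong_induction_on with
  | _ m ih =>
    intro u hu
    by_cases hall : ∀ s : Sym2 (Fin n), ¬ s.IsDiag → u s ≤ 1
    · refine ⟨u, ⟨by simp, by simp⟩, rfl, hall, fun _ _ => rfl⟩
    push Not at hall
    obtain ⟨s, hs, h2⟩ := hall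
    obtain ⟨i, j, hij, rfl⟩ : ∃ i j : Fin n, i < j ∧ s = s(i, j) := by
      induction s using Sym2.ind with
      | _ a b =>
        have hab : a ≠ b := by simpa using hs
        rcases lt_or_gt_of_ne hab with h | h
        · exact ⟨a, b, h, rfl⟩
        · exact ⟨b, a, h, Sym2.eq_swap⟩
    obtain ⟨w, rfl⟩ : ∃ w, u = w + Finsupp.single s(i, j) 2 := by
      refine ⟨u - Finsupp.single s(i, j) 2, (tsub_add_cancel_of_le ?_).symm⟩
      rw [Finsupp.single_le_iff]
      exact h2
    set u' := w + (Finsupp.single s(i, i) 1 + Finsupp.single s(j, j) 1) with hu'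
    have hoff : ∀ t : Sym2 (Fin n), ¬ t.IsDiag → u' t = w t := by
      intro t ht
      have h1 : s(i, i) ≠ t := by rintro rfl; simp at ht
      have h1' : s(j, j) ≠ t := by rintro rfl; simp at ht
      simp [hu', Finsupp.single_apply, h1, h1']
    have hlt : (∑ s : Sym2 (Fin n), if s.IsDiag then 0 else u' s) < m := by
      rw [← hu]
      apply Finset.sum_lt_sum
      · intro t _
        split_ifs with ht
        · exact le_rfl
        · rw [hoff t ht]; simp
      · refine ⟨s(i, j), Finset.mem_univ _, ?_⟩
        rw [if_neg hs, if_neg hs, hoff _ hs]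
        simp
    obtain ⟨v, hv1, hv2, hv3, hv4⟩ := ih _ hlt u' rfl
    refine ⟨v, (rel_step n k w i j hij).symm'.trans' hv1, ?_, hv3, ?_⟩
    · rw [hv2, hu', VN_add, VN_add, VN_add]
      congr 1
      funext t
      simp only [Pi.add_apply, VN_single, wtN, Sym2.lift_mk]
      ring
    · intro t ht
      rw [hv4 t ht, hoff t ht]
      have h20 : ((2 : ℕ) : ZMod 2) = 0 := rfl
      simp only [Finsupp.add_apply, Finsupp.single_apply]
      push_cast
      split_ifs <;> simp
      exact h20.symm

lemma le_one_eq {a b : ℕ} (ha : a ≤ 1) (hb : b ≤ 1) (h : (a : ZMod 2) = b) : a = b := by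
  rw [ZMod.natCast_eq_natCast_iff] at h
  unfold Nat.ModEq at h
  omega

lemma canon_unique (n : ℕ) (hn : 2 ≤ n) (u v : Sym2 (Fin n) →₀ ℕ) (hV : VN n u = VN n v)
    (hu : ∀ s, ¬ s.IsDiag → u s ≤ 1) (hv : ∀ s, ¬ s.IsDiag → v s ≤ 1)
    (h : ∀ s : Sym2 (Fin (n - 1)), ¬ s.IsDiag →
      (u (Sym2.map (ι n) s) : ZMod 2) = v (Sym2.map (ι n) s)) : u = v := by
  classical
  set l : Fin n := lastIdx n (by omega) with hl
  have hcast : ∀ i : Fin n, i ≠ l → ∃ i' : Fin (n - 1), ι n i' = i := by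
    intro i hi
    have : i.val ≠ n - 1 := fun hh => hi (Fin.ext hh)
    exact ⟨⟨i.val, by omega⟩, Fin.ext rfl⟩
  have h1 : ∀ i j : Fin n, i ≠ l → j ≠ l → i ≠ j → u s(i, j) = v s(i, j) := by
    intro i j hi hj hij
    have hd : ¬ s(i, j).IsDiag := by simpa using hij
    apply le_one_eq (hu _ hd) (hv _ hd)
    obtain ⟨i', rfl⟩ := hcast i hi
    obtain ⟨j', rfl⟩ := hcast j hj
    have := h s(i', j') (by
      simp only [Sym2.mk_isDiag_iff]
      rintro rfl
      exact hij rfl)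
    simpa using this
  have key : ∀ i : Fin n, u s(i, i) + ∑ j : Fin n, u s(i, j)
      = v s(i, i) + ∑ j : Fin n, v s(i, j) := by
    intro i
    rw [← VN_eq, ← VN_eq, hV]
  have key2 : ∀ i : Fin n, u s(i, i) * 2 + ∑ j ∈ Finset.univ.erase i, u s(i, j)
      = v s(i, i) * 2 + ∑ j ∈ Finset.univ.erase i, v s(i, j) := by
    intro i
    have := key i
    rw [← Finset.add_sum_erase _ (fun j => u s(i, j)) (Finset.mem_univ i),
      ← Finset.add_sum_erase _ (fun j => v s(i, j)) (Finset.mem_univ i)] at this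
    omega
  have h2 : ∀ i : Fin n, i ≠ l → u s(i, l) = v s(i, l) := by
    intro i hi
    have hd : ¬ s(i, l).IsDiag := by simpa using hi
    have hul := hu _ hd
    have hvl := hv _ hd
    have hk := key2 i
    have hmem : l ∈ Finset.univ.erase i := by simp [hi.symm]
    rw [← Finset.add_sum_erase _ (fun j => u s(i, j)) hmem,
      ← Finset.add_sum_erase _ (fun j => v s(i, j)) hmem] at hk
    have hs : ∑ j ∈ (Finset.univ.erase i).erase l, u s(i, j)
        = ∑ j ∈ (Finset.univ.erase i).erase l, v s(i, j) := by
      apply Finset.sum_congr rfl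
      intro j hj
      simp only [Finset.mem_erase, Finset.mem_univ, and_true] at hj
      exact h1 i j hi hj.1 (Ne.symm hj.2)
    omega
  have h3 : ∀ i j : Fin n, i ≠ j → u s(i, j) = v s(i, j) := by
    intro i j hij
    by_cases hj : j = l
    · subst hj; exact h2 i hij
    · by_cases hi : i = l
      · subst hi; rw [Sym2.eq_swap]; exact h2 j hj
      · exact h1 i j hi hj hij
  ext s
  induction s using Sym2.ind with
  | _ i j =>
    by_cases hij : i = j
    · subst hij
      have hk := key2 i
      have hs : ∑ j ∈ Finset.univ.erase i, u s(i, j) = ∑ j ∈ Finset.univ.erase i, v s(i, j) := by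
        apply Finset.sum_congr rfl
        intro j hj
        exact h3 i j (Finset.ne_of_mem_erase hj).symm
      omega
    · exact h3 i j hij

/-- parities of the off-diagonal exponents on `[n-1]`. -/
def par (n : ℕ) (u : Sym2 (Fin n) →₀ ℕ) : {s : Sym2 (Fin (n - 1)) // ¬ s.IsDiag} → ZMod 2 :=
  fun s => (u (Sym2.map (ι n) s.1) : ZMod 2)

lemma map_not_diag (n : ℕ) (s : Sym2 (Fin (n - 1))) (h : ¬ s.IsDiag) :
    ¬ (Sym2.map (ι n) s).IsDiag := by
  induction s using Sym2.ind with
  | _ a b =>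
    simp only [Sym2.map_mk, Sym2.mk_isDiag_iff] at h ⊢
    exact fun hh => h (Fin.castLE_injective _ hh)

lemma rel_of_par (n : ℕ) (hn : 2 ≤ n) (k : Type*) [Field k] (u v : Sym2 (Fin n) →₀ ℕ)
    (hV : VN n u = VN n v) (h : par n u = par n v) : Rel n k u v := by
  obtain ⟨u', hu1, hu2, hu3, hu4⟩ := exists_red n k _ u rfl
  obtain ⟨v', hv1, hv2, hv3, hv4⟩ := exists_red n k _ v rfl
  have : u' = v' := by
    apply canon_unique n hn u' v' (by rw [hu2, hv2, hV]) hu3 hv3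
    intro s hs
    rw [hu4 _ (map_not_diag n s hs), hv4 _ (map_not_diag n s hs)]
    exact congrFun h ⟨s, hs⟩
  subst this
  exact hu1.trans' hv1.symm'

lemma card_target (n : ℕ) :
    Nat.card ({s : Sym2 (Fin (n - 1)) // ¬ s.IsDiag} → ZMod 2) = 2 ^ c (n - 1) := by
  classical
  rw [Nat.card_fun, Nat.card_zmod, Nat.card_eq_fintype_card, Sym2.card_subtype_not_diag,
    Fintype.card_fin, c]

/-- `k[x]/J_n` is toral in the `V_n`-grading: every `V_n`-graded
component of `k[x]/J_n` has dimension at most `2^{c_{n-1}}`; equivalently every fiber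
has at most `2^{c_{n-1}}` classes modulo `L'_n`. -/
theorem quotient_is_toral (n : ℕ) (hn : 2 ≤ n) (k : Type*) [Field k] :
    (∀ b : Fin n → ℕ,
      Module.finrank k
        ↥((Submodule.span k {f : R n k | ∃ u, VN n u = b ∧ f = monomial u (1 : k)}).map
          (Ideal.Quotient.mkₐ k (Jideal n k)).toLinearMap) ≤ 2 ^ c (n - 1)) ∧
    ∀ b : Fin n → ℕ,
      Nat.card (Quot fun u v : ↥(fiber n b) => toZ n ↑u - toZ n ↑v ∈ L'lat n) ≤
        2 ^ c (n - 1) := by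
  constructor
  · intro b
    classical
    rw [Submodule.map_span]
    set S := (Ideal.Quotient.mkₐ k (Jideal n k)).toLinearMap ''
      {f : R n k | ∃ u, VN n u = b ∧ f = monomial u (1 : k)} with hS
    have hex : ∀ x : S, ∃ u, VN n u = b ∧
        Ideal.Quotient.mk (Jideal n k) (monomial u (1 : k)) = x.1 := by
      rintro ⟨x, f, ⟨u, hu, rfl⟩, rfl⟩
      exact ⟨u, hu, rfl⟩
    choose g hg1 hg2 using hex
    have hinj : Function.Injective (fun x : S => par n (g x)) := by
      intro x y hxy
      have hr := rel_of_par n hn k (g x) (g y) (by rw [hg1, hg1]) hxy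
      apply Subtype.ext
      rw [← hg2 x, ← hg2 y]
      exact Ideal.Quotient.eq.mpr hr.2
    have hfin : Finite S := Finite.of_injective _ hinj
    have := Fintype.ofFinite S
    calc _ ≤ S.toFinset.card := finrank_span_le_card S
      _ = Nat.card S := by rw [Nat.card_eq_fintype_card, Set.toFinset_card]
      _ ≤ _ := Nat.card_le_card_of_injective _ hinj
      _ = _ := card_target n
  · intro b
    rw [← card_target n]
    apply Nat.card_le_card_of_injective (fun q => par n (Quot.out q).1)
    intro x y hxy
    have hr := rel_of_par n hn k (Quot.out x).1 (Quot.out y).1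
      ((Quot.out x).2.trans (Quot.out y).2.symm) hxy
    rw [← Quot.out_eq x, ← Quot.out_eq y]
    exact Quot.sound hr.1

end Veronese
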